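/- arXiv:2603.27248 — 3 statements merged into one kernel-verified Lean document; each statement's English description precedes it below -/
import Mathlib

section
/- Let s ≥ 1, let 1 ≤ q ≤ s, and set n = T_s + q. If a partition λ of n satisfies deg(λ) = Δ_n, then supp(λ) = s; that is, every degree-maximizing partition of n has exactly s distinct part sizes. -/
/-!
Write `r` for the number of distinct part sizes. A partition with `r` distinct part sizes has
size at least `1 + ⋯ + r`, so `T s + q < T (s + 1)` forces `r ≤ s`. Both bonus counts range over
subsets of the part sizes, so the degree is at most `r (r - 1) + 2 r = r (r + 1)`; for `r < s` this
is at most `s (s - 1)`. The partition with parts `1, …, s` and one further copy of `q` has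
`s` distinct part sizes and one repeated part, hence degree at least `s (s - 1) + 1`, so a
maximizer cannot have `r < s`.
-/


namespace PartitionDegree

/-- The `m`-th triangular number. -/
def T (m : ℕ) : ℕ := m * (m + 1) / 2

/-- The number of distinct part sizes of a partition. -/
def supp {n : ℕ} (lam : n.Partition) : ℕ := lam.parts.toFinset.card

/-- The gap-bonus count: distinct part sizes `L ≥ 2` such that `L - 1` is not a part size. -/
def gapBonus {n : ℕ} (lam : n.Partition) : ℕ :=
  (lam.parts.toFinset.filter (fun L => 2 ≤ L ∧ (L - 1) ∉ lam.parts)).card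

/-- The multiplicity-bonus count: distinct part sizes occurring with multiplicity at least 2. -/
def multBonus {n : ℕ} (lam : n.Partition) : ℕ :=
  (lam.parts.toFinset.filter (fun L => 2 ≤ lam.parts.count L)).card

/-- The degree of a partition in the partition graph. -/
def deg {n : ℕ} (lam : n.Partition) : ℕ :=
  supp lam * (supp lam - 1) + gapBonus lam + multBonus lam

/-- The maximal degree over all partitions of `n`. -/
def maxDeg (n : ℕ) : ℕ := Finset.univ.sup (fun lam : n.Partition => deg lam)

/-- `ρ(q)`: the maximum of `a + b` over pairs with `T a + T b ≤ q`. -/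
noncomputable def rho (q : ℕ) : ℕ := sSup {c : ℕ | ∃ a b : ℕ, c = a + b ∧ T a + T b ≤ q}

/-- `mu` is the conjugate of `lam`: for each `k ≥ 1`, the multiplicity of `k` in `mu`
equals (number of parts of `lam` that are `≥ k`) minus (number of parts `≥ k + 1`). -/
def IsConjugate {n : ℕ} (lam mu : n.Partition) : Prop :=
  ∀ k : ℕ, 1 ≤ k →
    mu.parts.count k =
      Multiset.countP (fun p => k ≤ p) lam.parts -
        Multiset.countP (fun p => k + 1 ≤ p) lam.parts

lemma two_mul_T (m : ℕ) : 2 * T m = m * (m + 1) :=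
  Nat.mul_div_cancel' (Nat.even_mul_succ_self m).two_dvd

lemma T_succ (m : ℕ) : T (m + 1) = T m + (m + 1) := by
  have h1 := two_mul_T m
  have h2 := two_mul_T (m + 1)
  nlinarith

lemma T_mono : Monotone T :=
  monotone_nat_of_le_succ fun m => by rw [T_succ]; omega

lemma sum_Icc_eq_T (s : ℕ) : ∑ i ∈ Finset.Icc 1 s, i = T s := by
  induction s with
  | zero => simp [T]
  | succ k ih => rw [Finset.sum_Icc_succ_top (by omega), ih, T_succ]

/-- The sum of `k` distinct positive integers is at least `1 + ⋯ + k`: the largest of them is at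
least `k`, and the others are handled by induction. -/
lemma T_card_le_sum (S : Finset ℕ) (hS : ∀ x ∈ S, 0 < x) : T S.card ≤ ∑ x ∈ S, x := by
  induction S using Finset.induction_on_max with
  | empty => simp [T]
  | insert a S hlt ih =>
    have ha : a ∉ S := fun h => lt_irrefl _ (hlt a h)
    have hsub : S ⊆ Finset.Ico 1 a := fun x hx =>
      Finset.mem_Ico.2 ⟨hS x (Finset.mem_insert_of_mem hx), hlt x hx⟩
    have hcard := Finset.card_le_card hsub
    have hpos := hS a (Finset.mem_insert_self _ _)
    rw [Nat.card_Ico] at hcard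
    rw [Finset.card_insert_of_notMem ha, Finset.sum_insert ha, T_succ]
    have := ih fun x hx => hS x (Finset.mem_insert_of_mem hx)
    omega

lemma T_supp_le {n : ℕ} (lam : n.Partition) : T (supp lam) ≤ n := by
  have h1 : T (supp lam) ≤ ∑ x ∈ lam.parts.toFinset, x :=
    T_card_le_sum _ fun x hx => lam.parts_pos (Multiset.mem_toFinset.1 hx)
  have h2 : ∑ x ∈ lam.parts.toFinset, x ≤ lam.parts.sum := by
    rw [Finset.sum_multiset_count]
    refine Finset.sum_le_sum fun x hx => ?_
    have := Multiset.count_pos.2 (Multiset.mem_toFinset.1 hx)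
    simpa using Nat.le_mul_of_pos_left x this
  exact h1.trans (h2.trans lam.parts_sum.le)

lemma deg_le {n : ℕ} (lam : n.Partition) : deg lam ≤ supp lam * (supp lam + 1) := by
  have hA : gapBonus lam ≤ supp lam := Finset.card_filter_le _ _
  have hB : multBonus lam ≤ supp lam := Finset.card_filter_le _ _
  unfold deg
  generalize supp lam = r at *
  cases r with
  | zero => simp_all
  | succ k =>
    rw [Nat.add_sub_cancel]
    nlinarith

/-- The partition of `T s + q` with parts `1, …, s` and one additional part `q`. -/
def staircase (s q : ℕ) (hq1 : 1 ≤ q) : (T s + q).Partition where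
  parts := q ::ₘ (Finset.Icc 1 s).val
  parts_pos := by
    intro i hi
    rcases Multiset.mem_cons.1 hi with rfl | hi
    · exact hq1
    · exact (Finset.mem_Icc.1 (Finset.mem_def.2 hi)).1
  parts_sum := by
    have h : (Finset.Icc 1 s).val.sum = T s := by
      rw [← sum_Icc_eq_T, Finset.sum_eq_multiset_sum, Multiset.map_id']
    rw [Multiset.sum_cons, h, add_comm]

lemma lt_deg_staircase (s q : ℕ) (hq1 : 1 ≤ q) (hqs : q ≤ s) :
    s * (s - 1) < deg (staircase s q hq1) := by
  have hfin : (staircase s q hq1).parts.toFinset = Finset.Icc 1 s := by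
    ext x
    simp only [staircase, Multiset.mem_toFinset, Multiset.mem_cons, Finset.mem_val,
      Finset.mem_Icc]
    omega
  have hsupp : supp (staircase s q hq1) = s := by
    simp [supp, hfin]
  have hmult : 0 < multBonus (staircase s q hq1) := by
    refine Finset.card_pos.2 ⟨q, Finset.mem_filter.2 ⟨?_, ?_⟩⟩
    · rw [hfin]
      exact Finset.mem_Icc.2 ⟨hq1, hqs⟩
    · have : 0 < (Finset.Icc 1 s).val.count q :=
        Multiset.count_pos.2 (Finset.mem_Icc.2 ⟨hq1, hqs⟩)
      simp only [staircase, Multiset.count_cons_self]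
      omega
  unfold deg
  rw [hsupp]
  omega

/-- for `n = T s + q` with `1 ≤ q ≤ s`, every degree-maximizing
partition of `n` has support size exactly `s`. -/
theorem support_maximal (s q : ℕ) (hs : 1 ≤ s) (hq1 : 1 ≤ q) (hqs : q ≤ s)
    (lam : (T s + q).Partition) (hmax : deg lam = maxDeg (T s + q)) :
    supp lam = s := by
  have hle : supp lam ≤ s := by
    by_contra! h
    have h1 := T_mono (Nat.succ_le_of_lt h)
    have h2 := T_supp_le lam
    rw [Nat.succ_eq_add_one, T_succ] at h1
    omega
  by_contra hne
  have hlt : supp lam ≤ s - 1 := by omega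
  have hlow : s * (s - 1) < deg lam := by
    rw [hmax]
    exact (lt_deg_staircase s q hq1 hqs).trans_le
      (Finset.le_sup (f := fun mu : (T s + q).Partition => deg mu) (Finset.mem_univ _))
  have hup : supp lam * (supp lam + 1) ≤ (s - 1) * s :=
    Nat.mul_le_mul hlt (by omega)
  rw [mul_comm] at hlow
  exact absurd ((deg_le lam).trans hup) (not_le.2 hlow)

end PartitionDegree
end

section
/- Let s ≥ 1, let 0 ≤ q ≤ s, and set n = T_s + q. If λ is a partition of n with supp(λ) = s, then T_{A(λ)} + T_{B(λ)} ≤ q, where T_m = m(m+1)/2. -/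
/-!
Let `S` be the set of part sizes, `G ⊆ S` the sizes counted by `A`, and `M ⊆ S` the repeated sizes.
Counting every size once, and every repeated size once more, gives `n ≥ ∑ S + ∑ M`. It therefore
suffices that `∑ M ≥ T |M|`, as for any set of positive integers, and that `∑ S ≥ T |S| + T |G|`.

The latter (`T_card_add_T_card_gaps_le_sum`) is by induction on the maximum `m` of `S`: adding `m`
to a set `S'` of smaller elements with gap set `G'` raises the right-hand side by `|S'| + 1`, and by
a further `|G'| + 1` if `m - 1 ∉ S'`. The element `m` pays for this, because the elements of a set
and the predecessors of its gap elements are disjoint sets of positive integers, so that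
`|S'| + |G'| ≤ N` whenever `S'` is bounded by `N` (`card_add_card_gaps_le`).
-/

namespace PartitionDegree

/-- The elements `L ≥ 2` of `S` whose predecessor is missing from `S`. -/
def gaps (S : Finset ℕ) : Finset ℕ := S.filter (fun L => 2 ≤ L ∧ L - 1 ∉ S)

lemma mem_gaps {S : Finset ℕ} {L : ℕ} : L ∈ gaps S ↔ L ∈ S ∧ 2 ≤ L ∧ L - 1 ∉ S := by
  simp [gaps]

/-- The elements of `S` and the predecessors of its gap elements are pairwise distinct. -/
lemma card_add_card_gaps_le (S : Finset ℕ) (N : ℕ) (h : ∀ x ∈ S, 1 ≤ x ∧ x ≤ N) :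
    S.card + (gaps S).card ≤ N := by
  have himg : ((gaps S).image (fun L => L - 1)).card = (gaps S).card := by
    apply Finset.card_image_of_injOn
    intro a ha b hb hab
    have ha' := (mem_gaps.1 ha).2.1
    have hb' := (mem_gaps.1 hb).2.1
    simp only at hab
    omega
  have hdisj : Disjoint S ((gaps S).image (fun L => L - 1)) := by
    rw [Finset.disjoint_right]
    intro x hx
    obtain ⟨L, hL, rfl⟩ := Finset.mem_image.1 hx
    exact (mem_gaps.1 hL).2.2
  have hsub : S ∪ (gaps S).image (fun L => L - 1) ⊆ Finset.Icc 1 N := by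
    intro x hx
    rw [Finset.mem_Icc]
    rcases Finset.mem_union.1 hx with hx | hx
    · exact h x hx
    · obtain ⟨L, hL, rfl⟩ := Finset.mem_image.1 hx
      have h1 := mem_gaps.1 hL
      have h2 := h L h1.1
      omega
  have hcard := Finset.card_le_card hsub
  rw [Finset.card_union_of_disjoint hdisj, himg, Nat.card_Icc] at hcard
  omega

lemma T_card_add_T_card_gaps_le_sum (S : Finset ℕ) (h : ∀ x ∈ S, 1 ≤ x) :
    T S.card + T (gaps S).card ≤ ∑ x ∈ S, x := by
  induction S using Finset.induction_on_max with
  | empty => simp [gaps, T]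
  | insert m S hm ih =>
    have hS : ∀ x ∈ S, 1 ≤ x := fun x hx => h x (Finset.mem_insert_of_mem hx)
    have hm1 : 1 ≤ m := h m (Finset.mem_insert_self m S)
    have hmS : m ∉ S := fun hx => (hm m hx).false
    specialize ih hS
    rw [Finset.card_insert_of_notMem hmS, Finset.sum_insert hmS, T_succ]
    by_cases hg : 2 ≤ m ∧ m - 1 ∉ S
    · have hgaps : gaps (insert m S) = insert m (gaps S) := by
        ext x
        have hx : x ∈ S → x < m := hm x
        simp only [mem_gaps, Finset.mem_insert]
        grind
      have hmG : m ∉ gaps S := fun hx => hmS (mem_gaps.1 hx).1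
      -- Since `m - 1 ∉ S`, the smaller elements are bounded by `m - 2`.
      have hb := card_add_card_gaps_le S (m - 2) (fun x hx => by
        have h1 := hm x hx
        have h2 : x ≠ m - 1 := fun e => hg.2 (e ▸ hx)
        exact ⟨hS x hx, by omega⟩)
      rw [hgaps, Finset.card_insert_of_notMem hmG, T_succ]
      omega
    · have hgaps : gaps (insert m S) = gaps S := by
        ext x
        have hx : x ∈ S → x < m := hm x
        simp only [mem_gaps, Finset.mem_insert]
        grind
      have hb := card_add_card_gaps_le S (m - 1) (fun x hx => by
        have h1 := hm x hx
        exact ⟨hS x hx, by omega⟩)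
      rw [hgaps]
      omega

/-- triangular budget bound: if `λ ⊢ T s + q` has support size `s`,
then `T_{A(λ)} + T_{B(λ)} ≤ q`. -/
theorem triangular_budget (s q : ℕ) (hs : 1 ≤ s) (hqs : q ≤ s)
    (lam : (T s + q).Partition) (hsupp : supp lam = s) :
    T (gapBonus lam) + T (multBonus lam) ≤ q := by
  set S := lam.parts.toFinset with hS
  set M := S.filter (fun L => 2 ≤ lam.parts.count L) with hM
  have hpos : ∀ x ∈ S, 1 ≤ x := fun x hx => lam.parts_pos (Multiset.mem_toFinset.1 hx)
  have hgap : gapBonus lam = (gaps S).card := by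
    simp [gapBonus, gaps, hS]
  have h1 := T_card_add_T_card_gaps_le_sum S hpos
  have h2 := T_card_add_T_card_gaps_le_sum M (fun x hx => hpos x (Finset.mem_filter.1 hx).1)
  have hsum : ∑ x ∈ S, x + ∑ x ∈ M, x ≤ T s + q := by
    calc ∑ x ∈ S, x + ∑ x ∈ M, x
        = ∑ x ∈ S, (x + if 2 ≤ lam.parts.count x then x else 0) := by
          rw [Finset.sum_add_distrib, hM, Finset.sum_filter]
      _ ≤ ∑ x ∈ S, lam.parts.count x * x := by
          refine Finset.sum_le_sum fun x hx => ?_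
          have hc : 1 ≤ lam.parts.count x :=
            Multiset.one_le_count_iff_mem.2 (Multiset.mem_toFinset.1 hx)
          split_ifs with h
          · nlinarith
          · nlinarith
      _ = lam.parts.sum := by
          rw [Finset.sum_multiset_count]
          simp [hS]
      _ = T s + q := lam.parts_sum
  have hcard : S.card = s := hsupp
  have hmult : multBonus lam = M.card := rfl
  rw [hcard] at h1
  rw [hgap, hmult]
  omega

end PartitionDegree
end

section
/- Let s ≥ 1, let 0 ≤ q ≤ s, and set n = T_s + q. Let a ≥ 1 and b ≥ 1 be integers with a + b = ρ(q) and T_a + T_b ≤ q. Then the number of partitions λ of n with deg(λ) = Δ_n, A(λ) = a, and B(λ) = b is at least q − T_a − T_b + 1. -/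
/-!
Write `r` for the support of a partition. Its size is at least `T r + T A + T B`: the distinct part
sizes dominate the staircase `1, …, r`; each gap raises all part sizes above it, so `A` gaps cost
at least `1 + ⋯ + A`; and the second copies of the `B` repeated sizes cost at least `1 + ⋯ + B`
(`T_supp_add_le`). For size `T s + q` with `q ≤ s` this forces `r ≤ s`. If `r = s` the bonuses
satisfy `T A + T B ≤ q`, whence `A + B ≤ ρ(q)`; if `r < s` then `A, B ≤ r` already gives
`deg ≤ r (r + 1) ≤ s (s - 1)`. Hence every degree is at most `s (s - 1) + ρ(q)` (`deg_le`).

Conversely, open a gap before each of the top `a` steps of the staircase `1, …, s` and repeat each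
of `1, …, b` once; there is room since `a + b ≤ T a + T b ≤ q ≤ s`. The remaining slack
`q - T a - T b` is split arbitrarily between raising the top part and adding further copies of `1`.
As `a, b ≥ 1`, neither changes the support or the profile `(a, b)`, so all of these partitions
attain the bound, and they are told apart by their number of `1`s (`exists_family`).
-/

namespace PartitionDegree

/-! ### Triangular numbers and `rho` -/

lemma T_zero : T 0 = 0 := rfl

lemma le_T (m : ℕ) : m ≤ T m := by
  cases m with
  | zero => simp
  | succ m => rw [T_succ]; omega

lemma sum_range_succ_eq_T (m : ℕ) : ∑ j ∈ Finset.range m, (j + 1) = T m := by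
  induction m with
  | zero => simp [T_zero]
  | succ m ih => rw [Finset.sum_range_succ, ih, T_succ]

lemma add_le_rho {q A B : ℕ} (h : T A + T B ≤ q) : A + B ≤ rho q := by
  refine le_csSup ⟨q, ?_⟩ ⟨A, B, rfl, h⟩
  rintro c ⟨x, y, rfl, hxy⟩
  have := le_T x
  have := le_T y
  omega

/-! ### The upper bound on the degree -/

/-- The elements `L ≥ 2` of `D` whose predecessor is missing from `D`; for the set of part sizes
of a partition, its cardinality is the gap-bonus count. -/
def gapSet (D : Finset ℕ) : Finset ℕ := D.filter (fun L => 2 ≤ L ∧ (L - 1) ∉ D)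

lemma gapSet_insert {m : ℕ} {D : Finset ℕ} (h : ∀ x ∈ D, x < m) :
    gapSet (insert m D) = if 2 ≤ m ∧ m - 1 ∉ D then insert m (gapSet D) else gapSet D := by
  ext x
  unfold gapSet
  have hm : m ∉ D := fun hm => lt_irrefl _ (h m hm)
  have hx : x ∈ D → x < m := h x
  split_ifs with hc <;> simp only [Finset.mem_filter, Finset.mem_insert] <;> grind

/-- A set of positive integers has room for all its elements and all its gaps below its
maximum. -/
lemma card_add_gap_le_sup (D : Finset ℕ) (hpos : ∀ x ∈ D, 0 < x) :
    D.card + (gapSet D).card ≤ D.sup id := by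
  induction D using Finset.induction_on_max with
  | empty => simp [gapSet]
  | insert m D hlt ih =>
    have ih := ih fun x hx => hpos x (Finset.mem_insert_of_mem hx)
    have hm : m ∉ D := fun hm => lt_irrefl _ (hlt m hm)
    have hm0 : 0 < m := hpos m (Finset.mem_insert_self _ _)
    have hsup : (insert m D).sup id = m := by
      rw [Finset.sup_insert]
      exact sup_eq_left.2 (Finset.sup_le fun x hx => (hlt x hx).le)
    rw [hsup, Finset.card_insert_of_notMem hm, gapSet_insert hlt]
    split_ifs with hc
    · have hm' : m ∉ gapSet D := fun h => hm (Finset.mem_filter.1 h).1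
      have : D.sup id ≤ m - 2 := Finset.sup_le fun x hx => by
        have h1 := hlt x hx
        have h2 : x ≠ m - 1 := fun h => hc.2 (h ▸ hx)
        simp only [id]
        omega
      rw [Finset.card_insert_of_notMem hm']
      omega
    · have : D.sup id ≤ m - 1 := Finset.sup_le fun x hx => Nat.le_sub_one_of_lt (hlt x hx)
      omega

/-- Each gap raises every part size above it, so `g` gaps cost at least `1 + 2 + ⋯ + g` on top of
the staircase. -/
lemma T_card_add_T_gap_le_sum (D : Finset ℕ) (hpos : ∀ x ∈ D, 0 < x) :
    T D.card + T (gapSet D).card ≤ ∑ x ∈ D, x := by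
  induction D using Finset.induction_on_max with
  | empty => simp [gapSet, T_zero]
  | insert m D hlt ih =>
    have ih := ih fun x hx => hpos x (Finset.mem_insert_of_mem hx)
    have hm : m ∉ D := fun hm => lt_irrefl _ (hlt m hm)
    have hsup : (insert m D).sup id = m := by
      rw [Finset.sup_insert]
      exact sup_eq_left.2 (Finset.sup_le fun x hx => (hlt x hx).le)
    have hle := card_add_gap_le_sup (insert m D) hpos
    rw [hsup, Finset.card_insert_of_notMem hm, gapSet_insert hlt] at hle
    rw [Finset.sum_insert hm, Finset.card_insert_of_notMem hm, gapSet_insert hlt, T_succ]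
    split_ifs at hle ⊢ with hc
    · have hm' : m ∉ gapSet D := fun h => hm (Finset.mem_filter.1 h).1
      rw [Finset.card_insert_of_notMem hm'] at hle ⊢
      rw [T_succ]
      omega
    · omega

lemma gapBonus_eq {n : ℕ} (lam : n.Partition) :
    gapBonus lam = (gapSet lam.parts.toFinset).card := by
  simp [gapBonus, gapSet]

/-- The size of a partition pays for its staircase, its gaps and its repetitions. -/
lemma T_supp_add_le {n : ℕ} (lam : n.Partition) :
    T (supp lam) + T (gapBonus lam) + T (multBonus lam) ≤ n := by
  set D := lam.parts.toFinset with hD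
  set E := D.filter (fun L => 2 ≤ lam.parts.count L) with hE
  have hpos : ∀ x ∈ D, 0 < x := fun x hx => lam.parts_pos (Multiset.mem_toFinset.1 hx)
  have h1 := T_card_add_T_gap_le_sum D hpos
  have h2 := T_card_add_T_gap_le_sum E fun x hx => hpos x (Finset.mem_filter.1 hx).1
  have h3 : ∑ x ∈ D, x + ∑ x ∈ E, x ≤ n := by
    conv_rhs => rw [← lam.parts_sum, Finset.sum_multiset_count]
    rw [hE, Finset.sum_filter, ← Finset.sum_add_distrib]
    refine Finset.sum_le_sum fun x hx => ?_
    have hc : 1 ≤ lam.parts.count x := Multiset.one_le_count_iff_mem.2 (Multiset.mem_toFinset.1 hx)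
    rw [smul_eq_mul]
    split_ifs with h
    · nlinarith
    · nlinarith
  have e1 : supp lam = D.card := rfl
  have e2 : multBonus lam = E.card := rfl
  rw [e1, e2, gapBonus_eq, ← hD]
  omega

lemma deg_le_s14 {s q : ℕ} (hqs : q ≤ s) (lam : (T s + q).Partition) :
    deg lam ≤ s * (s - 1) + rho q := by
  have hT := T_supp_add_le lam
  have hA : gapBonus lam ≤ supp lam := Finset.card_filter_le _ _
  have hB : multBonus lam ≤ supp lam := Finset.card_filter_le _ _
  unfold deg
  generalize supp lam = r at *
  generalize gapBonus lam = A at *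
  generalize multBonus lam = B at *
  rcases lt_trichotomy r s with h | rfl | h
  · -- Both bonuses are at most `r`, so the degree is at most `r * (r + 1) ≤ s * (s - 1)`.
    have h1 : r * (r - 1) + A + B ≤ (r + 1) * r := by
      cases r with
      | zero => omega
      | succ r => simp only [Nat.add_sub_cancel]; nlinarith
    have h2 : (r + 1) * r ≤ s * (s - 1) := Nat.mul_le_mul h (Nat.le_sub_one_of_lt h)
    omega
  · have := add_le_rho (q := q) (A := A) (B := B) (by omega)
    omega
  · have := T_mono (Nat.succ_le_of_lt h)
    rw [Nat.succ_eq_add_one, T_succ] at this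
    omega

/-! ### The family of maximizers -/

/-- The `j`-th part size (from `j = 0`) of the `s`-staircase with a gap opened before each of its
last `a` steps and its top step raised by a further `k`. -/
def step (s a k j : ℕ) : ℕ := (j + 1) + (j + 1 - (s - a)) + if j + 1 = s then k else 0

lemma step_strictMonoOn (s a k : ℕ) : StrictMonoOn (step s a k) (Finset.range s) := by
  intro x hx y hy hxy
  simp only [Finset.coe_range, Set.mem_Iio] at hx hy
  unfold step
  split_ifs <;> omega

lemma sum_step {s a : ℕ} (k : ℕ) (ha : 1 ≤ a) (has : a ≤ s) :
    ∑ j ∈ Finset.range s, step s a k j = T s + T a + k := by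
  unfold step
  have h2 : ∑ j ∈ Finset.range s, (j + 1 - (s - a)) = T a := by
    obtain ⟨c, rfl⟩ := Nat.exists_eq_add_of_le' has
    rw [Finset.sum_range_add, ← sum_range_succ_eq_T a,
      Finset.sum_eq_zero (s := Finset.range c), zero_add]
    · exact Finset.sum_congr rfl fun j _ => by omega
    · intro j hj
      have := Finset.mem_range.1 hj
      omega
  have h3 : ∑ j ∈ Finset.range s, (if j + 1 = s then k else 0) = k := by
    rw [Finset.sum_eq_single_of_mem (s - 1) (Finset.mem_range.2 (by omega))]
    · rw [if_pos (by omega)]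
    · intro j _ hj
      rw [if_neg (by omega)]
  rw [Finset.sum_add_distrib, Finset.sum_add_distrib, sum_range_succ_eq_T, h2, h3]

/-- The parts of a maximizer: the gapped staircase `step s a k`, one further copy of each of
`1, …, b`, and `l` further copies of `1`. -/
def famParts (s a b k l : ℕ) : Multiset ℕ :=
  (Multiset.range s).map (step s a k) + ((Multiset.range b).map (· + 1) + Multiset.replicate l 1)

section Family

variable {s a b k l : ℕ}

lemma step_of_lt (ha : 1 ≤ a) {j : ℕ} (hj : j < s - a) : step s a k j = j + 1 := by
  unfold step
  split_ifs <;> omega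

lemma famParts_sum (ha : 1 ≤ a) (has : a ≤ s) :
    (famParts s a b k l).sum = T s + T a + k + (T b + l) := by
  have h1 : ((Multiset.range s).map (step s a k)).sum = T s + T a + k := sum_step k ha has
  have h2 : ((Multiset.range b).map (· + 1)).sum = T b := sum_range_succ_eq_T b
  simp [famParts, h1, h2]

lemma mem_famParts (ha : 1 ≤ a) (hb : 1 ≤ b) (hs : a + b ≤ s) {x : ℕ} :
    x ∈ famParts s a b k l ↔ ∃ j < s, step s a k j = x := by
  simp only [famParts, Multiset.mem_add, Multiset.mem_map, Multiset.mem_range,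
    Multiset.mem_replicate]
  constructor
  · rintro (h | ⟨j, hj, rfl⟩ | ⟨-, rfl⟩)
    · exact h
    · exact ⟨j, by omega, step_of_lt ha (by omega)⟩
    · exact ⟨0, by omega, step_of_lt ha (by omega)⟩
  · exact Or.inl

lemma famParts_toFinset (ha : 1 ≤ a) (hb : 1 ≤ b) (hs : a + b ≤ s) :
    (famParts s a b k l).toFinset = (Finset.range s).image (step s a k) := by
  ext x
  simp [mem_famParts ha hb hs]

lemma count_famParts (ha : 1 ≤ a) (hb : 1 ≤ b) (hs : a + b ≤ s) {x : ℕ}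
    (hx : x ∈ famParts s a b k l) :
    (famParts s a b k l).count x =
      1 + ((if 1 ≤ x ∧ x ≤ b then 1 else 0) + if x = 1 then l else 0) := by
  have h1 : ((Multiset.range s).map (step s a k)).count x = 1 := by
    rw [mem_famParts ha hb hs] at hx
    refine Multiset.count_eq_one_of_mem ?_ (by simpa using hx)
    exact ((Finset.range s).nodup.map_on fun y hy z hz h =>
      (step_strictMonoOn s a k).injOn hy hz h)
  have h2 : ((Multiset.range b).map (· + 1)).count x = if 1 ≤ x ∧ x ≤ b then 1 else 0 := by
    rw [Multiset.count_eq_of_nodup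
      ((Multiset.nodup_range b).map (fun _ _ h => Nat.succ_injective h))]
    congr 1
    simp only [Multiset.mem_map, Multiset.mem_range, eq_iff_iff]
    exact ⟨by rintro ⟨j, hj, rfl⟩; omega, fun h => ⟨x - 1, by omega, by omega⟩⟩
  have h3 : (Multiset.replicate l 1).count x = if x = 1 then l else 0 := by
    rw [Multiset.count_replicate]
    simp only [eq_comm]
  rw [famParts, Multiset.count_add, Multiset.count_add, h1, h2, h3]

/-- The gaps of the family sit exactly at its top `a` part sizes. -/
lemma famParts_gaps (ha : 1 ≤ a) (hb : 1 ≤ b) (hs : a + b ≤ s) :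
    ((famParts s a b k l).toFinset.filter
      (fun L => 2 ≤ L ∧ (L - 1) ∉ famParts s a b k l)).card = a := by
  have h : (famParts s a b k l).toFinset.filter
      (fun L => 2 ≤ L ∧ (L - 1) ∉ famParts s a b k l) =
      (Finset.Ico (s - a) s).image (step s a k) := by
    ext x
    simp only [Finset.mem_filter, Multiset.mem_toFinset, mem_famParts ha hb hs, Finset.mem_image,
      Finset.mem_Ico]
    constructor
    · rintro ⟨⟨j, hj, rfl⟩, h2, h3⟩
      refine ⟨j, ⟨?_, hj⟩, rfl⟩
      by_contra! hlt
      rw [step_of_lt ha hlt] at h2 h3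
      exact h3 ⟨j - 1, by omega, by rw [step_of_lt ha (by omega)]; omega⟩
    · rintro ⟨j, ⟨hj1, hj2⟩, rfl⟩
      refine ⟨⟨j, hj2, rfl⟩, by unfold step; omega, ?_⟩
      rintro ⟨i, hi, h⟩
      unfold step at h
      split_ifs at h <;> omega
  rw [h, Finset.card_image_of_injOn, Nat.card_Ico]
  · omega
  · exact (step_strictMonoOn s a k).injOn.mono fun x hx => by
      simp only [Finset.coe_Ico, Set.mem_Ico, Finset.coe_range, Set.mem_Iio] at hx ⊢
      exact hx.2

/-- The repeated part sizes of the family are exactly `1, …, b`. -/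
lemma famParts_mults (ha : 1 ≤ a) (hb : 1 ≤ b) (hs : a + b ≤ s) :
    ((famParts s a b k l).toFinset.filter
      (fun L => 2 ≤ (famParts s a b k l).count L)).card = b := by
  have h : (famParts s a b k l).toFinset.filter
      (fun L => 2 ≤ (famParts s a b k l).count L) = Finset.Icc 1 b := by
    ext x
    simp only [Finset.mem_filter, Multiset.mem_toFinset, Finset.mem_Icc]
    constructor
    · rintro ⟨hx, h⟩
      rw [count_famParts ha hb hs hx] at h
      split_ifs at h <;> omega
    · intro hx
      have hmem : x ∈ famParts s a b k l := (mem_famParts ha hb hs).2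
        ⟨x - 1, by omega, by rw [step_of_lt ha (by omega)]; omega⟩
      refine ⟨hmem, ?_⟩
      rw [count_famParts ha hb hs hmem, if_pos hx]
      omega
  simp [h]

/-- Every split `k + l` of the slack `q - T a - T b` gives a partition of support `s` with bonus
profile `(a, b)`, and the multiplicity of `1` recovers the split. -/
lemma exists_family {q : ℕ} (ha : 1 ≤ a) (hb : 1 ≤ b) (hs : a + b ≤ s)
    (hq : T a + T b + (k + l) = q) :
    ∃ lam : (T s + q).Partition,
      supp lam = s ∧ gapBonus lam = a ∧ multBonus lam = b ∧ lam.parts.count 1 = 2 + l := by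
  refine ⟨⟨famParts s a b k l, ?_, ?_⟩, ?_, famParts_gaps ha hb hs, famParts_mults ha hb hs, ?_⟩
  · intro x hx
    obtain ⟨j, -, rfl⟩ := (mem_famParts ha hb hs).1 hx
    unfold step
    omega
  · rw [famParts_sum ha (by omega)]
    omega
  · change (famParts s a b k l).toFinset.card = s
    rw [famParts_toFinset ha hb hs, Finset.card_image_of_injOn (step_strictMonoOn s a k).injOn,
      Finset.card_range]
  · have hmem : 1 ∈ famParts s a b k l := (mem_famParts ha hb hs).2
      ⟨0, by omega, step_of_lt ha (by omega)⟩
    change (famParts s a b k l).count 1 = 2 + l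
    rw [count_famParts ha hb hs hmem, if_pos ⟨le_rfl, hb⟩, if_pos rfl]
    omega

end Family

/-- slack family lower bound: for a mixed realized profile `(a, b)`,
the fibre of maximizers with that profile has at least `q - T a - T b + 1` elements. -/
theorem slack_family (s q : ℕ) (hs : 1 ≤ s) (hqs : q ≤ s)
    (a b : ℕ) (ha : 1 ≤ a) (hb : 1 ≤ b)
    (hab : a + b = rho q) (hbudget : T a + T b ≤ q) :
    q - T a - T b + 1 ≤
      (Finset.univ.filter
        (fun lam : (T s + q).Partition =>
          deg lam = maxDeg (T s + q) ∧ gapBonus lam = a ∧ multBonus lam = b)).card := by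
  have hsum : a + b ≤ s := by
    have := le_T a
    have := le_T b
    omega
  set e := q - T a - T b with he
  have hex : ∀ l ∈ Finset.range (e + 1), ∃ lam : (T s + q).Partition,
      supp lam = s ∧ gapBonus lam = a ∧ multBonus lam = b ∧ lam.parts.count 1 = 2 + l := by
    intro l hl
    have := Finset.mem_range.1 hl
    exact exists_family (k := e - l) ha hb hsum (by omega)
  choose! f hf using hex
  rw [← Finset.card_range (e + 1)]
  refine Finset.card_le_card_of_injOn f ?_ ?_
  · intro l hl
    obtain ⟨h1, h2, h3, -⟩ := hf l hl
    have hdeg : deg (f l) = s * (s - 1) + rho q := by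
      rw [deg, h1, h2, h3, ← hab, add_assoc]
    refine Finset.mem_coe.2 (Finset.mem_filter.2 ⟨Finset.mem_univ _, ?_, h2, h3⟩)
    refine le_antisymm (Finset.le_sup (f := fun lam : (T s + q).Partition => deg lam)
      (Finset.mem_univ _)) (Finset.sup_le fun lam _ => ?_)
    rw [hdeg]
    exact deg_le_s14 hqs lam
  · intro x hx y hy hxy
    have h1 := (hf x hx).2.2.2
    have h2 := (hf y hy).2.2.2
    rw [hxy] at h1
    omega

end PartitionDegree
end
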